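/- The map x ↦ y^{δ(x)} preserves (∫_Q ·)-comparability: if m₀|x-x₀|^q ≤ s(x) ≤ M₀|x-x₀|^q near x₀ and w̃(x,y) = y^{1-2|x-x₀|^q}, w(x,y) = y^{1-2s(x)}, then for every cube Q contained in a sufficiently small neighborhood of (x₀,0) with 0 < y < 1 on Q, there exists c̃ > 0 (independent of Q) with (1/|Q| ∫_Q w)(1/|Q| ∫_Q w^{-1}) ≥ c̃ (1/|Q| ∫_Q w̃)(1/|Q| ∫_Q w̃^{-1}). -/

import Mathlib

open MeasureTheory Set

/-!
Integrating over `y` first on a box `A × (l, H)` turns `∫ y ^ (1 - 2 s)` into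
`(H - l) ∫_A H ^ (1 - 2 s)`, up to a factor `2`, and `∫ y ^ (2 s - 1)` into
`∫_A H ^ (2 s - 1) G(s)` with `G(σ) = ∫_l^H (y / H) ^ (2 σ - 1) dy`. The function `G` is decreasing
and satisfies `G(σ) ≤ M G(M σ)`, so a bound `s ≤ M t` gives `G(t) ≤ M G(s)`, whatever the size of
`l / H`.

For the model exponent `t`, which is Hölder continuous, `H ^ (-2 t)` oscillates by at most a bounded
factor over a box of width at most `H`; hence its product of integrals is at most a multiple of
`(H - l) |A| ∫_A G(t)`. For `s` no regularity is available, but `H ^ (1 - 2 s)` increases and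
`∫_l^H y ^ (2 s - 1) dy` decreases with the value of `s`, and Chebyshev's integral inequality for
oppositely ordered functions bounds its product of integrals below by a multiple of
`(H - l) |A| ∫_A G(s)`.
-/

open Filter Topology
open scoped ENNReal

section Chebyshev

variable {α : Type*}

lemma mul_add_mul_le_of_antivary {f g : α → ℝ≥0∞} (h : Antivary f g) (x y : α) :
    f x * g x + f y * g y ≤ f x * g y + f y * g x := by
  wlog hxy : f x ≤ f y generalizing x y
  · simpa only [add_comm] using this y x (le_of_not_ge hxy)
  obtain hlt | heq := hxy.lt_or_eq
  · have hg : g y ≤ g x := h.symm hlt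
    obtain ⟨d, hd⟩ := exists_add_of_le hxy
    calc f x * g x + f y * g y = f x * g x + f x * g y + d * g y := by rw [hd]; ring
      _ ≤ f x * g x + f x * g y + d * g x := by gcongr
      _ = f x * g y + f y * g x := by rw [hd]; ring
  · rw [heq, add_comm]

lemma measure_univ_mul_lintegral_mul_le_of_antivary [MeasurableSpace α] {μ : Measure α}
    {f g : α → ℝ≥0∞} (hf : Measurable f) (hg : Measurable g) (h : Antivary f g) :
    μ univ * ∫⁻ x, f x * g x ∂μ ≤ (∫⁻ x, f x ∂μ) * ∫⁻ x, g x ∂μ := by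
  have hdiag : ∫⁻ x, ∫⁻ y, (f x * g x + f y * g y) ∂μ ∂μ
      = 2 * (μ univ * ∫⁻ x, f x * g x ∂μ) := by
    simp_rw [lintegral_add_left measurable_const, lintegral_const]
    rw [lintegral_add_left (by fun_prop), lintegral_mul_const _ (by fun_prop), lintegral_const]
    ring
  have hcross : ∫⁻ x, ∫⁻ y, (f x * g y + f y * g x) ∂μ ∂μ
      = 2 * ((∫⁻ x, f x ∂μ) * ∫⁻ x, g x ∂μ) := by
    simp_rw [lintegral_add_left (hg.const_mul _), lintegral_const_mul _ hg,
      lintegral_mul_const _ hf]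
    rw [lintegral_add_left (by fun_prop), lintegral_mul_const _ hf, lintegral_const_mul _ hg]
    ring
  rw [← ENNReal.mul_le_mul_iff_right two_ne_zero ENNReal.ofNat_ne_top, ← hdiag, ← hcross]
  exact lintegral_mono fun x => lintegral_mono fun y => mul_add_mul_le_of_antivary h x y

end Chebyshev

section Hoelder

lemma rpow_sub_rpow_le_mul_sub {q a b : ℝ} (hq : 1 ≤ q) (hb : 0 ≤ b) (hba : b ≤ a)
    (ha : a ≤ 1) : a ^ q - b ^ q ≤ q * (a - b) := by
  refine (convex_Icc (0 : ℝ) 1).image_sub_le_mul_sub_of_deriv_le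
    (Real.continuous_rpow_const (by linarith)).continuousOn
    (Real.differentiable_rpow_const hq).differentiableOn ?_ b ⟨hb, hba.trans ha⟩ a
    ⟨hb.trans hba, ha⟩ hba
  intro y hy
  rw [interior_Icc] at hy
  rw [Real.deriv_rpow_const]
  exact mul_le_of_le_one_right (by linarith)
    (Real.rpow_le_one hy.1.le hy.2.le (by linarith))

lemma rpow_sub_rpow_le {q a b : ℝ} (hq : 0 < q) (hb : 0 ≤ b) (hba : b ≤ a) (ha : a ≤ 1) :
    a ^ q - b ^ q ≤ max q 1 * (a - b) ^ min q 1 := by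
  obtain h1 | h1 := le_total q 1
  · have := Real.rpow_add_le_add_rpow (sub_nonneg.2 hba) hb hq.le h1
    rw [sub_add_cancel] at this
    rw [max_eq_right h1, min_eq_left h1]
    linarith
  · rw [max_eq_left h1, min_eq_right h1, Real.rpow_one]
    exact rpow_sub_rpow_le_mul_sub h1 hb hba ha

lemma dist_rpow_sub_dist_rpow_le {X : Type*} [PseudoMetricSpace X] {q : ℝ} (hq : 0 < q)
    {x y x₀ : X} (hx : dist x x₀ ≤ 1) :
    dist x x₀ ^ q - dist y x₀ ^ q ≤ max q 1 * dist x y ^ min q 1 := by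
  obtain h | h := le_total (dist x x₀) (dist y x₀)
  · calc dist x x₀ ^ q - dist y x₀ ^ q ≤ 0 :=
          sub_nonpos.2 (Real.rpow_le_rpow dist_nonneg h hq.le)
      _ ≤ max q 1 * dist x y ^ min q 1 := by positivity
  · calc dist x x₀ ^ q - dist y x₀ ^ q
        ≤ max q 1 * (dist x x₀ - dist y x₀) ^ min q 1 := rpow_sub_rpow_le hq dist_nonneg h hx
      _ ≤ max q 1 * dist x y ^ min q 1 := by
          have := dist_triangle x y x₀
          gcongr
          linarith

lemma rpow_neg_mul_rpow_le_exp {H c p : ℝ} (hH : 0 < H) (hH1 : H ≤ 1) (hc : 0 ≤ c)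
    (hp : 0 < p) : H ^ (-(c * H ^ p)) ≤ Real.exp (c / p) := by
  have hlog : -(Real.log H * H ^ p) ≤ 1 / p :=
    (neg_le_abs _).trans (Real.abs_log_mul_self_rpow_lt H p hH hH1 hp).le
  rw [Real.rpow_def_of_pos hH, Real.exp_le_exp]
  calc Real.log H * -(c * H ^ p) = c * -(Real.log H * H ^ p) := by ring
    _ ≤ c * (1 / p) := by gcongr
    _ = c / p := by ring

lemma rpow_le_exp_mul_rpow_of_sub_le {H c p u v : ℝ} (hH : 0 < H) (hH1 : H ≤ 1) (hc : 0 ≤ c)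
    (hp : 0 < p) (huv : v - u ≤ c * H ^ p) : H ^ u ≤ Real.exp (c / p) * H ^ v := by
  calc H ^ u ≤ H ^ (-(c * H ^ p) + v) :=
        Real.rpow_le_rpow_of_exponent_ge hH hH1 (by linarith)
    _ = H ^ (-(c * H ^ p)) * H ^ v := Real.rpow_add hH _ _
    _ ≤ Real.exp (c / p) * H ^ v := by
        gcongr
        exact rpow_neg_mul_rpow_le_exp hH hH1 hc hp

lemma rpow_one_sub_two_mul_dist_rpow_le {X : Type*} [PseudoMetricSpace X] {q H : ℝ} (hq : 0 < q)
    (hH : 0 < H) (hH1 : H ≤ 1) {x y x₀ : X} (hx : dist x x₀ ≤ 1) (hxy : dist x y ≤ H) :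
    H ^ (1 - 2 * dist x x₀ ^ q)
      ≤ Real.exp (2 * max q 1 / min q 1) * H ^ (1 - 2 * dist y x₀ ^ q) := by
  have hp : 0 < min q 1 := lt_min hq one_pos
  refine rpow_le_exp_mul_rpow_of_sub_le hH hH1 (by positivity) hp ?_
  calc 1 - 2 * dist y x₀ ^ q - (1 - 2 * dist x x₀ ^ q)
      = 2 * (dist x x₀ ^ q - dist y x₀ ^ q) := by ring
    _ ≤ 2 * (max q 1 * dist x y ^ min q 1) := by
        gcongr
        exact dist_rpow_sub_dist_rpow_le hq hx
    _ ≤ 2 * (max q 1 * H ^ min q 1) := by gcongr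
    _ = 2 * max q 1 * H ^ min q 1 := by ring

end Hoelder

/-- The integral `∫_l^H (y / H) ^ e dy` of a power normalized to be `1` at the right endpoint. It is
an extended real, equal to `⊤` when `l = 0` and `e ≤ -1`. -/
noncomputable def normalizedPowerIntegral (l H e : ℝ) : ℝ≥0∞ :=
  ∫⁻ y in Ioo l H, ENNReal.ofReal ((y / H) ^ e)

section NormalizedPowerIntegral

variable {l H : ℝ}

lemma lintegral_rpow_eq_mul_normalizedPowerIntegral (hl : 0 ≤ l) (hlH : l < H) (e : ℝ) :
    ∫⁻ y in Ioo l H, ENNReal.ofReal (y ^ e)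
      = ENNReal.ofReal (H ^ e) * normalizedPowerIntegral l H e := by
  have hH : 0 < H := hl.trans_lt hlH
  rw [normalizedPowerIntegral, ← lintegral_const_mul _ (by fun_prop)]
  refine setLIntegral_congr_fun measurableSet_Ioo fun y hy => ?_
  have hy0 : 0 ≤ y := hl.trans hy.1.le
  rw [← ENNReal.ofReal_mul (by positivity), ← Real.mul_rpow hH.le (by positivity),
    mul_div_cancel₀ _ hH.ne']

lemma normalizedPowerIntegral_antitone (hl : 0 ≤ l) (hlH : l < H) :
    Antitone (normalizedPowerIntegral l H) := by
  intro a b hab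
  have hH : 0 < H := hl.trans_lt hlH
  refine setLIntegral_mono' measurableSet_Ioo fun y hy => ENNReal.ofReal_le_ofReal ?_
  have hy0 : 0 < y := hl.trans_lt hy.1
  exact Real.rpow_le_rpow_of_exponent_ge (by positivity) ((div_le_one hH).2 hy.2.le) hab

lemma normalizedPowerIntegral_eq (hl : 0 ≤ l) (hlH : l < H) {e : ℝ} (he : -1 < e) :
    normalizedPowerIntegral l H e
      = ENNReal.ofReal (H * ((1 - (l / H) ^ (e + 1)) / (e + 1))) := by
  have hH : 0 < H := hl.trans_lt hlH
  have hint : IntervalIntegrable (fun y : ℝ => (y / H) ^ e) volume l H := by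
    refine ((intervalIntegral.intervalIntegrable_rpow' he).div_const (H ^ e)).congr fun y hy => ?_
    rw [uIoc_of_le hlH.le] at hy
    exact (Real.div_rpow (hl.trans hy.1.le) hH.le _).symm
  have hnonneg : 0 ≤ᵐ[volume.restrict (Ioo l H)] fun y : ℝ => (y / H) ^ e := by
    filter_upwards [ae_restrict_mem measurableSet_Ioo] with y hy
    exact Real.rpow_nonneg (div_nonneg (hl.trans hy.1.le) hH.le) _
  rw [normalizedPowerIntegral, ← ofReal_integral_eq_lintegral_ofReal
      ((intervalIntegrable_iff_integrableOn_Ioo_of_le hlH.le).1 hint) hnonneg,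
    ← integral_Ioc_eq_integral_Ioo, ← intervalIntegral.integral_of_le hlH.le,
    intervalIntegral.integral_comp_div (fun u : ℝ => u ^ e) hH.ne',
    integral_rpow (Or.inl he), div_self hH.ne', Real.one_rpow, smul_eq_mul]

lemma normalizedPowerIntegral_le (hl : 0 ≤ l) (hlH : l < H) {e : ℝ} (he : 0 ≤ e) :
    normalizedPowerIntegral l H e ≤ ENNReal.ofReal (H - l) := by
  refine (normalizedPowerIntegral_antitone hl hlH he).trans_eq ?_
  simp [normalizedPowerIntegral]

lemma le_two_mul_normalizedPowerIntegral (hl : 0 ≤ l) (hlH : l < H) {e : ℝ} (he : e ≤ 1) :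
    ENNReal.ofReal (H - l) ≤ 2 * normalizedPowerIntegral l H e := by
  have hH : 0 < H := hl.trans_lt hlH
  have hone : normalizedPowerIntegral l H 1 = ENNReal.ofReal ((H - l) * (1 + l / H) / 2) := by
    rw [normalizedPowerIntegral_eq hl hlH (by norm_num), one_add_one_eq_two, Real.rpow_two]
    congr 1
    field_simp
    ring
  calc ENNReal.ofReal (H - l) ≤ ENNReal.ofReal (2 * ((H - l) * (1 + l / H) / 2)) := by
        refine ENNReal.ofReal_le_ofReal ?_
        have : 0 ≤ (H - l) * (l / H) := mul_nonneg (by linarith) (by positivity)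
        linarith
    _ = 2 * normalizedPowerIntegral l H 1 := by
        rw [hone, ENNReal.ofReal_mul zero_le_two, ENNReal.ofReal_ofNat]
    _ ≤ 2 * normalizedPowerIntegral l H e := by
        gcongr
        exact normalizedPowerIntegral_antitone hl hlH he

lemma normalizedPowerIntegral_sub_one_le_mul (hl : 0 ≤ l) (hlH : l < H) {a b M : ℝ} (ha : 0 ≤ a)
    (hM : 1 ≤ M) (hb : b ≤ M * a) :
    normalizedPowerIntegral l H (a - 1)
      ≤ ENNReal.ofReal M * normalizedPowerIntegral l H (b - 1) := by
  have hH : 0 < H := hl.trans_lt hlH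
  have hM0 : 0 < M := one_pos.trans_le hM
  suffices normalizedPowerIntegral l H (a - 1)
      ≤ ENNReal.ofReal M * normalizedPowerIntegral l H (M * a - 1) by
    refine this.trans ?_
    gcongr
    exact normalizedPowerIntegral_antitone hl hlH (by linarith)
  obtain rfl | ha := ha.eq_or_lt
  · rw [mul_zero]
    exact le_mul_of_one_le_left zero_le (ENNReal.one_le_ofReal.2 hM)
  rw [normalizedPowerIntegral_eq hl hlH (by linarith),
    normalizedPowerIntegral_eq hl hlH (by linarith [mul_pos hM0 ha]),
    ← ENNReal.ofReal_mul hM0.le, sub_add_cancel, sub_add_cancel]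
  refine ENNReal.ofReal_le_ofReal ?_
  calc H * ((1 - (l / H) ^ a) / a) ≤ H * ((1 - (l / H) ^ (M * a)) / a) := by
        have : (l / H) ^ (M * a) ≤ (l / H) ^ a :=
          Real.rpow_le_rpow_of_exponent_ge' (by positivity) ((div_le_one hH).2 hlH.le) ha.le
            (le_mul_of_one_le_left ha.le hM)
        gcongr
    _ = M * (H * ((1 - (l / H) ^ (M * a)) / (M * a))) := by field_simp

end NormalizedPowerIntegral

/-- The integral of `y ^ e(x)` over the box `A × (l, H)`, as an extended real. -/
noncomputable def boxPowerIntegral {X : Type*} [MeasurableSpace X] (μ : Measure X) (A : Set X)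
    (l H : ℝ) (e : X → ℝ) : ℝ≥0∞ :=
  ∫⁻ p in A ×ˢ Ioo l H, ENNReal.ofReal (p.2 ^ e p.1) ∂μ.prod volume

/-- The Muckenhoupt `A₂` product of the weight `y ^ (1 - 2 σ(x))` on `Q`: the average of the weight
times the average of its reciprocal. The reciprocal is written `y ^ (2 σ(x) - 1)`, which agrees with
it for `y > 0`. A divergent average is read as `0`. -/
noncomputable def powerA2Product {X : Type*} [MeasurableSpace X] (μ : Measure X) (σ : X → ℝ)
    (Q : Set (X × ℝ)) : ℝ :=
  (⨍ p in Q, p.2 ^ (1 - 2 * σ p.1) ∂μ.prod volume) *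
    ⨍ p in Q, p.2 ^ (2 * σ p.1 - 1) ∂μ.prod volume

section Box

variable {X : Type*} [MeasurableSpace X] {μ : Measure X} {A : Set X} {l H : ℝ}
  {e s t : X → ℝ}

lemma setIntegral_rpow_eq_toReal_boxPowerIntegral (hA : MeasurableSet A) (he : Measurable e)
    (hl : 0 ≤ l) :
    ∫ p in A ×ˢ Ioo l H, p.2 ^ e p.1 ∂μ.prod volume = (boxPowerIntegral μ A l H e).toReal := by
  have hmeas : Measurable fun p : X × ℝ => p.2 ^ e p.1 := by fun_prop
  refine integral_eq_lintegral_of_nonneg_ae ?_ hmeas.aestronglyMeasurable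
  filter_upwards [ae_restrict_mem (hA.prod measurableSet_Ioo)] with p hp
  exact Real.rpow_nonneg (hl.trans hp.2.1.le) _

lemma powerA2Product_box (hA : MeasurableSet A) (hs : Measurable s) (hl : 0 ≤ l) :
    powerA2Product μ s (A ×ˢ Ioo l H)
      = ((μ.prod volume).real (A ×ˢ Ioo l H) ^ 2)⁻¹ *
        (boxPowerIntegral μ A l H (fun x => 1 - 2 * s x) *
          boxPowerIntegral μ A l H (fun x => 2 * s x - 1)).toReal := by
  rw [powerA2Product, setAverage_eq, setAverage_eq,
    setIntegral_rpow_eq_toReal_boxPowerIntegral hA (e := fun x => 1 - 2 * s x) (by fun_prop) hl,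
    setIntegral_rpow_eq_toReal_boxPowerIntegral hA (e := fun x => 2 * s x - 1) (by fun_prop) hl,
    ENNReal.toReal_mul, smul_eq_mul, smul_eq_mul]
  ring

variable [SFinite μ]

lemma boxPowerIntegral_eq (he : Measurable e) (hl : 0 ≤ l) (hlH : l < H) :
    boxPowerIntegral μ A l H e
      = ∫⁻ x in A, ENNReal.ofReal (H ^ e x) * normalizedPowerIntegral l H (e x) ∂μ := by
  rw [boxPowerIntegral, ← Measure.prod_restrict, lintegral_prod _ (by fun_prop)]
  simp_rw [lintegral_rpow_eq_mul_normalizedPowerIntegral hl hlH]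

lemma boxPowerIntegral_le (hA : MeasurableSet A) (he : Measurable e) (hl : 0 ≤ l) (hlH : l < H)
    (he0 : ∀ x ∈ A, 0 ≤ e x) :
    boxPowerIntegral μ A l H e
      ≤ ENNReal.ofReal (H - l) * ∫⁻ x in A, ENNReal.ofReal (H ^ e x) ∂μ := by
  rw [boxPowerIntegral_eq he hl hlH, ← lintegral_const_mul _ (by fun_prop)]
  refine setLIntegral_mono' hA fun x hx => ?_
  rw [mul_comm]
  gcongr
  exact normalizedPowerIntegral_le hl hlH (he0 x hx)

lemma le_two_mul_boxPowerIntegral (hA : MeasurableSet A) (he : Measurable e) (hl : 0 ≤ l)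
    (hlH : l < H) (he1 : ∀ x ∈ A, e x ≤ 1) :
    ENNReal.ofReal (H - l) * ∫⁻ x in A, ENNReal.ofReal (H ^ e x) ∂μ
      ≤ 2 * boxPowerIntegral μ A l H e := by
  rw [boxPowerIntegral_eq he hl hlH, ← lintegral_const_mul _ (by fun_prop),
    ← lintegral_const_mul' _ _ ENNReal.ofNat_ne_top]
  refine setLIntegral_mono' hA fun x hx => ?_
  rw [mul_comm, mul_left_comm]
  gcongr
  exact le_two_mul_normalizedPowerIntegral hl hlH (he1 x hx)

lemma boxPowerIntegral_ne_top (hA : MeasurableSet A) (hμA : μ A ≠ ∞) (he : Measurable e)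
    (hl : 0 ≤ l) (hlH : l < H) (hH1 : H ≤ 1) (he0 : ∀ x ∈ A, 0 ≤ e x) :
    boxPowerIntegral μ A l H e ≠ ∞ := by
  have hpow : ∫⁻ x in A, ENNReal.ofReal (H ^ e x) ∂μ ≤ μ A := by
    rw [← setLIntegral_one]
    refine setLIntegral_mono' hA fun x hx => ENNReal.ofReal_le_one.2 ?_
    exact Real.rpow_le_one (hl.trans hlH.le) hH1 (he0 x hx)
  exact ne_top_of_le_ne_top
    (ENNReal.mul_ne_top ENNReal.ofReal_ne_top (ne_top_of_le_ne_top hμA hpow))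
    (boxPowerIntegral_le hA he hl hlH he0)

lemma boxPowerIntegral_ne_top_of_le_mul (hA : MeasurableSet A) (hs : Measurable s)
    (ht : Measurable t) (hl : 0 ≤ l) (hlH : l < H) (hH1 : H ≤ 1) {M : ℝ} (hM : 1 ≤ M)
    (hs0 : ∀ x ∈ A, 0 ≤ s x) (ht1 : ∀ x ∈ A, t x ≤ 1 / 2) (hts : ∀ x ∈ A, t x ≤ M * s x)
    (hfin : boxPowerIntegral μ A l H (fun x => 2 * t x - 1) ≠ ∞) :
    boxPowerIntegral μ A l H (fun x => 2 * s x - 1) ≠ ∞ := by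
  have hH : 0 < H := hl.trans_lt hlH
  rw [boxPowerIntegral_eq (by fun_prop) hl hlH] at hfin ⊢
  refine ne_top_of_le_ne_top (ENNReal.mul_ne_top
    (ENNReal.ofReal_ne_top (r := H ^ (-1 : ℝ) * M)) hfin) ?_
  rw [← lintegral_const_mul' _ _ ENNReal.ofReal_ne_top]
  refine setLIntegral_mono' hA fun x hx => ?_
  have hpow_s : H ^ (2 * s x - 1) ≤ H ^ (-1 : ℝ) :=
    Real.rpow_le_rpow_of_exponent_ge hH hH1 (by linarith [hs0 x hx])
  have hpow_t : 1 ≤ ENNReal.ofReal (H ^ (2 * t x - 1)) := ENNReal.one_le_ofReal.2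
    (Real.one_le_rpow_of_pos_of_le_one_of_nonpos hH hH1 (by linarith [ht1 x hx]))
  calc ENNReal.ofReal (H ^ (2 * s x - 1)) * normalizedPowerIntegral l H (2 * s x - 1)
      ≤ ENNReal.ofReal (H ^ (-1 : ℝ))
          * (ENNReal.ofReal M * normalizedPowerIntegral l H (2 * t x - 1)) := by
        gcongr
        exact normalizedPowerIntegral_sub_one_le_mul hl hlH (by linarith [hs0 x hx]) hM
          (by linarith [hts x hx])
    _ ≤ ENNReal.ofReal (H ^ (-1 : ℝ)) * (ENNReal.ofReal M *
          (ENNReal.ofReal (H ^ (2 * t x - 1)) * normalizedPowerIntegral l H (2 * t x - 1))) := by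
        gcongr
        exact le_mul_of_one_le_left zero_le hpow_t
    _ = ENNReal.ofReal (H ^ (-1 : ℝ) * M) *
          (ENNReal.ofReal (H ^ (2 * t x - 1)) * normalizedPowerIntegral l H (2 * t x - 1)) := by
        rw [ENNReal.ofReal_mul (by positivity), mul_assoc]

lemma lintegral_rpow_mul_boxPowerIntegral_le (hA : MeasurableSet A) (ht : Measurable t)
    (hl : 0 ≤ l) (hlH : l < H) {K : ℝ} (hK : 0 ≤ K)
    (hosc : ∀ x ∈ A, ∀ y ∈ A, H ^ (1 - 2 * t x) ≤ K * H ^ (1 - 2 * t y)) :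
    (∫⁻ x in A, ENNReal.ofReal (H ^ (1 - 2 * t x)) ∂μ) *
        boxPowerIntegral μ A l H (fun x => 2 * t x - 1)
      ≤ ENNReal.ofReal K * (μ A * ∫⁻ x in A, normalizedPowerIntegral l H (2 * t x - 1) ∂μ) := by
  have hH : 0 < H := hl.trans_lt hlH
  have hG : Measurable fun x => normalizedPowerIntegral l H (2 * t x - 1) :=
    (normalizedPowerIntegral_antitone hl hlH).measurable.comp (by fun_prop)
  rw [boxPowerIntegral_eq (by fun_prop) hl hlH, ← lintegral_const_mul _ (by fun_prop),
    ← mul_assoc, ← lintegral_const_mul _ hG]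
  refine setLIntegral_mono' hA fun y hy => ?_
  have hsup : ∫⁻ x in A, ENNReal.ofReal (H ^ (1 - 2 * t x)) ∂μ
      ≤ ENNReal.ofReal (K * H ^ (1 - 2 * t y)) * μ A := by
    rw [← setLIntegral_const]
    exact setLIntegral_mono' hA fun x hx => ENNReal.ofReal_le_ofReal (hosc x hx y hy)
  have hcancel : ENNReal.ofReal (K * H ^ (1 - 2 * t y)) * ENNReal.ofReal (H ^ (2 * t y - 1))
      = ENNReal.ofReal K := by
    rw [← ENNReal.ofReal_mul (by positivity), mul_assoc, ← Real.rpow_add hH]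
    simp
  calc (∫⁻ x in A, ENNReal.ofReal (H ^ (1 - 2 * t x)) ∂μ) *
        (ENNReal.ofReal (H ^ (2 * t y - 1)) * normalizedPowerIntegral l H (2 * t y - 1))
      ≤ ENNReal.ofReal (K * H ^ (1 - 2 * t y)) * μ A *
        (ENNReal.ofReal (H ^ (2 * t y - 1)) * normalizedPowerIntegral l H (2 * t y - 1)) := by
        gcongr
    _ = ENNReal.ofReal (K * H ^ (1 - 2 * t y)) * ENNReal.ofReal (H ^ (2 * t y - 1)) * μ A *
        normalizedPowerIntegral l H (2 * t y - 1) := by ring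
    _ = ENNReal.ofReal K * μ A * normalizedPowerIntegral l H (2 * t y - 1) := by rw [hcancel]

lemma measure_mul_lintegral_normalizedPowerIntegral_le (hs : Measurable s)
    (hl : 0 ≤ l) (hlH : l < H) (hH1 : H ≤ 1) :
    μ A * ∫⁻ x in A, normalizedPowerIntegral l H (2 * s x - 1) ∂μ
      ≤ (∫⁻ x in A, ENNReal.ofReal (H ^ (1 - 2 * s x)) ∂μ) *
          boxPowerIntegral μ A l H (fun x => 2 * s x - 1) := by
  have hH : 0 < H := hl.trans_lt hlH
  set f : ℝ → ℝ≥0∞ := fun σ => ENNReal.ofReal (H ^ (1 - 2 * σ))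
  set g : ℝ → ℝ≥0∞ := fun σ =>
    ENNReal.ofReal (H ^ (2 * σ - 1)) * normalizedPowerIntegral l H (2 * σ - 1)
  have hf : Monotone f := fun σ τ hστ => ENNReal.ofReal_le_ofReal
    (Real.rpow_le_rpow_of_exponent_ge hH hH1 (by linarith))
  have hg : Antitone g := fun σ τ hστ => mul_le_mul'
    (ENNReal.ofReal_le_ofReal (Real.rpow_le_rpow_of_exponent_ge hH hH1 (by linarith)))
    (normalizedPowerIntegral_antitone hl hlH (by linarith))
  have hfg : ∀ σ, f σ * g σ = normalizedPowerIntegral l H (2 * σ - 1) := fun σ => by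
    simp only [f, g]
    rw [← mul_assoc, ← ENNReal.ofReal_mul (by positivity), ← Real.rpow_add hH]
    simp
  rw [boxPowerIntegral_eq (by fun_prop) hl hlH]
  simpa only [Function.comp_apply, hfg, Measure.restrict_apply_univ] using
    measure_univ_mul_lintegral_mul_le_of_antivary (μ := μ.restrict A) (hf.measurable.comp hs)
      (hg.measurable.comp hs) ((hf.antivary hg).comp_right s)

theorem boxPowerIntegral_mul_boxPowerIntegral_le (hA : MeasurableSet A) (hs : Measurable s)
    (ht : Measurable t) (hl : 0 ≤ l) (hlH : l < H) (hH1 : H ≤ 1) {K M : ℝ} (hK : 0 ≤ K)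
    (hM : 1 ≤ M) (hs0 : ∀ x ∈ A, 0 ≤ s x) (ht0 : ∀ x ∈ A, 0 ≤ t x)
    (ht1 : ∀ x ∈ A, t x ≤ 1 / 2) (hst : ∀ x ∈ A, s x ≤ M * t x)
    (hosc : ∀ x ∈ A, ∀ y ∈ A, H ^ (1 - 2 * t x) ≤ K * H ^ (1 - 2 * t y)) :
    boxPowerIntegral μ A l H (fun x => 1 - 2 * t x) *
        boxPowerIntegral μ A l H (fun x => 2 * t x - 1)
      ≤ ENNReal.ofReal (2 * K * M) * (boxPowerIntegral μ A l H (fun x => 1 - 2 * s x) *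
          boxPowerIntegral μ A l H (fun x => 2 * s x - 1)) := by
  set D := ENNReal.ofReal (H - l)
  set P : (X → ℝ) → ℝ≥0∞ := fun σ => boxPowerIntegral μ A l H fun x => 1 - 2 * σ x
  set Q : (X → ℝ) → ℝ≥0∞ := fun σ => boxPowerIntegral μ A l H fun x => 2 * σ x - 1
  set I : (X → ℝ) → ℝ≥0∞ := fun σ => ∫⁻ x in A, ENNReal.ofReal (H ^ (1 - 2 * σ x)) ∂μ
  set G : (X → ℝ) → ℝ≥0∞ := fun σ => ∫⁻ x in A, normalizedPowerIntegral l H (2 * σ x - 1) ∂μ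
  have hPt : P t ≤ D * I t := by
    apply boxPowerIntegral_le hA (by fun_prop) hl hlH
    intro x hx
    linarith [ht1 x hx]
  have hPs : D * I s ≤ 2 * P s := by
    apply le_two_mul_boxPowerIntegral hA (by fun_prop) hl hlH
    intro x hx
    linarith [hs0 x hx]
  have hG : G t ≤ ENNReal.ofReal M * G s := by
    rw [← lintegral_const_mul' _ _ ENNReal.ofReal_ne_top]
    exact setLIntegral_mono' hA fun x hx => normalizedPowerIntegral_sub_one_le_mul hl hlH
      (by linarith [ht0 x hx]) hM (by linarith [hst x hx])
  have hupper : I t * Q t ≤ ENNReal.ofReal K * (μ A * G t) :=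
    lintegral_rpow_mul_boxPowerIntegral_le hA ht hl hlH hK hosc
  have hlower : μ A * G s ≤ I s * Q s :=
    measure_mul_lintegral_normalizedPowerIntegral_le hs hl hlH hH1
  calc P t * Q t ≤ D * I t * Q t := by gcongr
    _ = D * (I t * Q t) := mul_assoc _ _ _
    _ ≤ D * (ENNReal.ofReal K * (μ A * G t)) := by gcongr
    _ ≤ D * (ENNReal.ofReal K * (μ A * (ENNReal.ofReal M * G s))) := by gcongr
    _ = ENNReal.ofReal K * ENNReal.ofReal M * (D * (μ A * G s)) := by ring
    _ ≤ ENNReal.ofReal K * ENNReal.ofReal M * (D * (I s * Q s)) := by gcongr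
    _ = ENNReal.ofReal K * ENNReal.ofReal M * (D * I s * Q s) := by ring
    _ ≤ ENNReal.ofReal K * ENNReal.ofReal M * (2 * P s * Q s) := by gcongr
    _ = ENNReal.ofReal (2 * K * M) * (P s * Q s) := by
        rw [ENNReal.ofReal_mul (by positivity), ENNReal.ofReal_mul zero_le_two,
          ENNReal.ofReal_ofNat]
        ring

theorem powerA2Product_box_le (hA : MeasurableSet A) (hμA : μ A ≠ ∞) (hs : Measurable s)
    (ht : Measurable t) (hl : 0 ≤ l) (hlH : l < H) (hH1 : H ≤ 1) {K M : ℝ} (hK : 0 ≤ K)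
    (hM : 1 ≤ M) (hs01 : ∀ x ∈ A, s x ∈ Icc 0 (1 / 2)) (ht01 : ∀ x ∈ A, t x ∈ Icc 0 (1 / 2))
    (hst : ∀ x ∈ A, s x ≤ M * t x) (hts : ∀ x ∈ A, t x ≤ M * s x)
    (hosc : ∀ x ∈ A, ∀ y ∈ A, H ^ (1 - 2 * t x) ≤ K * H ^ (1 - 2 * t y)) :
    powerA2Product μ t (A ×ˢ Ioo l H) ≤ 2 * K * M * powerA2Product μ s (A ×ˢ Ioo l H) := by
  have hC : 0 ≤ 2 * K * M := by positivity
  rw [powerA2Product_box hA hs hl, powerA2Product_box hA ht hl, mul_left_comm]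
  gcongr
  -- If the model integral diverges, its Bochner value is `0` and the claim is trivial.
  by_cases hfin : boxPowerIntegral μ A l H (fun x => 2 * t x - 1) = ∞
  · rw [hfin, ENNReal.toReal_mul, ENNReal.toReal_top, mul_zero]
    positivity
  rw [← ENNReal.toReal_ofReal hC, ← ENNReal.toReal_mul]
  have hfin_one_sub : boxPowerIntegral μ A l H (fun x => 1 - 2 * s x) ≠ ∞ := by
    refine boxPowerIntegral_ne_top hA hμA (by fun_prop) hl hlH hH1 fun x hx => ?_
    linarith [(hs01 x hx).2]
  have hfin_sub_one : boxPowerIntegral μ A l H (fun x => 2 * s x - 1) ≠ ∞ :=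
    boxPowerIntegral_ne_top_of_le_mul hA hs ht hl hlH hH1 hM (fun x hx => (hs01 x hx).1)
      (fun x hx => (ht01 x hx).2) hts hfin
  exact ENNReal.toReal_mono
    (ENNReal.mul_ne_top ENNReal.ofReal_ne_top (ENNReal.mul_ne_top hfin_one_sub hfin_sub_one))
    (boxPowerIntegral_mul_boxPowerIntegral_le hA hs ht hl hlH hH1 hK hM
      (fun x hx => (hs01 x hx).1) (fun x hx => (ht01 x hx).1) (fun x hx => (ht01 x hx).2) hst hosc)

end Box

lemma exists_le_mul_and_le_mul_of_tendsto_zero {α : Type*} {F : Filter α} {s t : α → ℝ}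
    {m₀ M₀ : ℝ} (hm₀ : 0 < m₀) (ht0 : ∀ x, 0 ≤ t x) (ht : Tendsto t F (𝓝 0))
    (hsand : ∀ᶠ x in F, m₀ * t x ≤ s x ∧ s x ≤ M₀ * t x) :
    ∃ M : ℝ, 1 ≤ M ∧ ∀ᶠ x in F, s x ∈ Icc 0 (1 / 2) ∧ t x ∈ Icc 0 (1 / 2) ∧
      s x ≤ M * t x ∧ t x ≤ M * s x := by
  set M := max 1 (max M₀ m₀⁻¹)
  have hM : 1 ≤ M := le_max_left _ _
  have hM₀M : M₀ ≤ M := (le_max_left _ _).trans (le_max_right _ _)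
  have hm₀M : m₀⁻¹ ≤ M := (le_max_right _ _).trans (le_max_right _ _)
  have hMt : ∀ᶠ x in F, M * t x ≤ 1 / 2 := by
    refine Tendsto.eventually_le_const (v := 0) (by norm_num) ?_
    simpa only [mul_zero] using ht.const_mul M
  refine ⟨M, hM, ?_⟩
  filter_upwards [hsand, hMt] with x ⟨hlower, hupper⟩ hx
  have hs0 : 0 ≤ s x := (mul_nonneg hm₀.le (ht0 x)).trans hlower
  have hst : s x ≤ M * t x := hupper.trans (by gcongr; exact ht0 x)
  have hts : t x ≤ M * s x := ((le_inv_mul_iff₀ hm₀).2 hlower).trans (by gcongr)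
  exact ⟨⟨hs0, hst.trans hx⟩, ⟨ht0 x, (le_mul_of_one_le_left (ht0 x) hM).trans hx⟩, hst, hts⟩

section MetricSpace

variable {X : Type*} [PseudoMetricSpace X]

lemma ball_subset_and_nonneg_and_le_one_of_ball_prod_subset {a x₀ : X} {h r ρ : ℝ} (hr : 0 < r)
    (hsub : Metric.ball (a, h) r ⊆ Metric.ball ((x₀, 0) : X × ℝ) ρ)
    (hstrip : Metric.ball (a, h) r ⊆ {p : X × ℝ | p.2 ∈ Ioo (0 : ℝ) 1}) :
    Metric.ball a r ⊆ Metric.ball x₀ ρ ∧ 0 ≤ h - r ∧ h + r ≤ 1 := by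
  rw [← ball_prod_same] at hsub hstrip
  have hinterval : Ioo (h - r) (h + r) ⊆ Ioo (0 : ℝ) 1 := fun y hy =>
    hstrip (mk_mem_prod (Metric.mem_ball_self hr) (Real.ball_eq_Ioo h r ▸ hy))
  refine ⟨fun x hx => ?_, (Ioo_subset_Ioo_iff (by linarith)).1 hinterval⟩
  have hmem := hsub (mk_mem_prod hx (Metric.mem_ball_self hr))
  rw [← ball_prod_same] at hmem
  exact hmem.1

lemma tendsto_dist_rpow_nhds_zero (x₀ : X) {q : ℝ} (hq : 0 < q) :
    Tendsto (fun x => dist x x₀ ^ q) (𝓝 x₀) (𝓝 0) := by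
  have hcont : Continuous fun x => dist x x₀ ^ q :=
    (continuous_id.dist continuous_const).rpow_const fun _ => Or.inr hq.le
  simpa [Real.zero_rpow hq.ne'] using hcont.tendsto x₀

variable [MeasurableSpace X] [OpensMeasurableSpace X]

theorem A2_product_comparison_general (μ : Measure X) [SFinite μ] [IsLocallyFiniteMeasure μ]
    {s : X → ℝ} (hs : Measurable s) {x₀ : X} {q m₀ M₀ : ℝ} (hq : 0 < q) (hm₀ : 0 < m₀)
    (hsand : ∀ᶠ x in 𝓝 x₀, m₀ * dist x x₀ ^ q ≤ s x ∧ s x ≤ M₀ * dist x x₀ ^ q) :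
    ∃ c ρ : ℝ, 0 < c ∧ 0 < ρ ∧ ∀ (z : X × ℝ) (r : ℝ), 0 < r →
      Metric.ball z r ⊆ Metric.ball (x₀, 0) ρ →
      Metric.ball z r ⊆ {p : X × ℝ | p.2 ∈ Ioo (0 : ℝ) 1} →
      c * powerA2Product μ (fun x => dist x x₀ ^ q) (Metric.ball z r)
        ≤ powerA2Product μ s (Metric.ball z r) := by
  obtain ⟨M, hM, hcomp⟩ := exists_le_mul_and_le_mul_of_tendsto_zero hm₀
    (fun x => Real.rpow_nonneg dist_nonneg q) (tendsto_dist_rpow_nhds_zero x₀ hq) hsand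
  obtain ⟨U, hU, hμU⟩ := μ.finiteAt_nhds x₀
  obtain ⟨ρ, hρ, hball⟩ := Metric.eventually_nhds_iff_ball.1
    ((hcomp.and (Metric.closedBall_mem_nhds x₀ one_pos)).and hU)
  set K := Real.exp (2 * max q 1 / min q 1)
  have hC : 0 < 2 * K * M := by positivity
  refine ⟨(2 * K * M)⁻¹, ρ, inv_pos.2 hC, hρ, ?_⟩
  rintro ⟨a, h⟩ r hr hsub hstrip
  obtain ⟨hA, hl, hH1⟩ :=
    ball_subset_and_nonneg_and_le_one_of_ball_prod_subset hr hsub hstrip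
  choose hs01 ht01 hst hts using fun x hx => (hball x (hA hx)).1.1
  have hμA : μ (Metric.ball a r) ≠ ∞ :=
    ne_top_of_le_ne_top hμU.ne (measure_mono fun x hx => (hball x (hA hx)).2)
  have hosc : ∀ x ∈ Metric.ball a r, ∀ y ∈ Metric.ball a r,
      (h + r) ^ (1 - 2 * dist x x₀ ^ q) ≤ K * (h + r) ^ (1 - 2 * dist y x₀ ^ q) := by
    intro x hx y hy
    have hxy : dist x y ≤ h + r := by
      linarith [dist_triangle_right x y a, Metric.mem_ball.1 hx, Metric.mem_ball.1 hy]
    exact rpow_one_sub_two_mul_dist_rpow_le hq (by linarith) hH1 (hball x (hA hx)).1.2 hxy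
  have ht : Measurable fun x => dist x x₀ ^ q :=
    (continuous_id.dist continuous_const).measurable.pow_const q
  rw [← ball_prod_same, Real.ball_eq_Ioo, inv_mul_le_iff₀ hC]
  exact powerA2Product_box_le measurableSet_ball hμA hs ht hl (by linarith) hH1
    (Real.exp_nonneg _) hM hs01 ht01 hst hts hosc

end MetricSpace

/-- comparison step of the non-`A₂` proof.  If
`m₀|x-x₀|^q ≤ s(x) ≤ M₀|x-x₀|^q` for `|x-x₀| ≤ R₀`, and `w(x,y) = y^(1-2 s x)`,
`w̃(x,y) = y^(1-2|x-x₀|^q)`, then there are `c̃ > 0` and a radius `ρ > 0` such that for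
every cube `Q` (sup-norm ball) contained in the `ρ`-neighborhood of `(x₀,0)` and in the
strip `0 < y < 1`, the `A₂` product of averages of `w` dominates `c̃` times that of `w̃`. -/
theorem A2_product_comparison
    {N : ℕ} (Ω : Set (Fin N → ℝ)) (hΩopen : IsOpen Ω)
    (s : (Fin N → ℝ) → ℝ) (hs : Measurable s) (hs01 : ∀ x, s x ∈ Icc (0:ℝ) 1)
    (x₀ : Fin N → ℝ) (hx₀ : x₀ ∈ Ω)
    (q R₀ m₀ M₀ : ℝ) (hq : 0 < q) (hR₀ : 0 < R₀) (hm₀ : 0 < m₀) (hM₀ : 0 < M₀)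
    (hsand : ∀ x : Fin N → ℝ, ‖x - x₀‖ ≤ R₀ →
      m₀ * ‖x - x₀‖ ^ q ≤ s x ∧ s x ≤ M₀ * ‖x - x₀‖ ^ q) :
    ∃ ctilde ρ : ℝ, 0 < ctilde ∧ 0 < ρ ∧
      ∀ (z : (Fin N → ℝ) × ℝ) (r : ℝ), 0 < r →
        Metric.ball z r ⊆ Metric.ball ((x₀, 0) : (Fin N → ℝ) × ℝ) ρ →
        Metric.ball z r ⊆ {p : (Fin N → ℝ) × ℝ | p.2 ∈ Ioo (0:ℝ) 1} →
        ctilde *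
            (((volume (Metric.ball z r)).toReal)⁻¹ *
                (∫ p in Metric.ball z r, p.2 ^ (1 - 2 * ‖p.1 - x₀‖ ^ q) ∂volume) *
              (((volume (Metric.ball z r)).toReal)⁻¹ *
                (∫ p in Metric.ball z r, p.2 ^ (2 * ‖p.1 - x₀‖ ^ q - 1) ∂volume))) ≤
          ((volume (Metric.ball z r)).toReal)⁻¹ *
              (∫ p in Metric.ball z r, p.2 ^ (1 - 2 * s p.1) ∂volume) *
            (((volume (Metric.ball z r)).toReal)⁻¹ *
              (∫ p in Metric.ball z r, p.2 ^ (2 * s p.1 - 1) ∂volume)) := by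
  have hnear : ∀ᶠ x in 𝓝 x₀, m₀ * dist x x₀ ^ q ≤ s x ∧ s x ≤ M₀ * dist x x₀ ^ q := by
    filter_upwards [Metric.closedBall_mem_nhds x₀ hR₀] with x hx
    simpa only [dist_eq_norm] using hsand x (mem_closedBall_iff_norm.1 hx)
  simpa only [powerA2Product, setAverage_eq, smul_eq_mul, dist_eq_norm, measureReal_def,
    Measure.volume_eq_prod] using
    A2_product_comparison_general volume hs hq hm₀ hnear
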